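/- (Proposition 1(iii).) The interpolant p^h(T,k) is a convex function of k on [0,1] for every fixed T ∈ [0,1] if and only if ρ_{i,j+2} − ρ_{i,j+1} ≥ ρ_{i,j+1} − ρ_{i,j} for all indices 0 ≤ i ≤ N and 0 ≤ j ≤ N−2. -/

import Mathlib

/-- The 1D hat function with mesh `h` centered at `c`. -/
noncomputable def hat (h c t : ℝ) : ℝ := max (1 - |t - c| / h) 0

/-- The finite-dimensional hat-function interpolant `p^h` with mesh `h = 1/N`
and coefficients `ρ`. -/
noncomputable def interp (N : ℕ) (ρ : ℕ → ℕ → ℝ) (T k : ℝ) : ℝ :=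
  ∑ i ∈ Finset.range (N + 1), ∑ j ∈ Finset.range (N + 1),
    ρ i j * (hat (1 / N) ((i : ℝ) * (1 / N)) T * hat (1 / N) ((j : ℝ) * (1 / N)) k)

/-! The interpolant is the one-dimensional hat interpolant in `T` of the row interpolants `k ↦ ∑ j,
ρ i j * φ j k`, so at a node `T = i * h` it is the `i`-th row and at any `T` it is a nonnegative
combination of rows. A row is convex exactly when its nodal second differences are nonnegative: they
are necessary by comparing slopes of adjacent secants, and sufficient because each hat is a second
difference of ramps `t ↦ max (t - c) 0`, so that summation by parts writes the row as an affine
function plus ramps weighted by its second differences. -/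

/-- The one-dimensional hat-function interpolant on `[0, N * h]` with mesh `h` and nodal values
`a 0, …, a N`. -/
noncomputable def hatInterp (h : ℝ) (N : ℕ) (a : ℕ → ℝ) (t : ℝ) : ℝ :=
  ∑ j ∈ Finset.range (N + 1), a j * hat h (j * h) t

theorem convexOn_sum {𝕜 E β ι : Type*} [Semiring 𝕜] [PartialOrder 𝕜] [AddCommMonoid E]
    [AddCommMonoid β] [PartialOrder β] [IsOrderedAddMonoid β] [SMul 𝕜 E] [Module 𝕜 β]
    {s : Set E} (hs : Convex 𝕜 s) {I : Finset ι} {f : ι → E → β}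
    (hf : ∀ i ∈ I, ConvexOn 𝕜 s (f i)) : ConvexOn 𝕜 s (fun x => ∑ i ∈ I, f i x) := by
  simpa only [Finset.sum_fn] using
    Finset.sum_induction f (ConvexOn 𝕜 s) (fun _ _ => ConvexOn.add) (convexOn_const 0 hs) hf

theorem convexOn_mul_add {𝕜 : Type*} [CommSemiring 𝕜] [PartialOrder 𝕜] [IsOrderedAddMonoid 𝕜]
    {s : Set 𝕜} (hs : Convex 𝕜 s) (b c : 𝕜) :
    ConvexOn 𝕜 s (fun t => b * t + c) :=
  ((LinearMap.mulLeft 𝕜 b).convexOn hs).add_const c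

theorem convexOn_max_sub_zero {𝕜 : Type*} [Ring 𝕜] [LinearOrder 𝕜] [IsStrictOrderedRing 𝕜]
    {s : Set 𝕜} (hs : Convex 𝕜 s) (c : 𝕜) :
    ConvexOn 𝕜 s (fun t => max (t - c) 0) :=
  ((convexOn_id hs).sub (concaveOn_const c hs)).sup (convexOn_const 0 hs)

theorem sub_le_sub_of_convexOn {𝕜 : Type*} [Field 𝕜] [LinearOrder 𝕜] [IsStrictOrderedRing 𝕜]
    {s : Set 𝕜} {f : 𝕜 → 𝕜} (hf : ConvexOn 𝕜 s f) {x h : 𝕜} (hh : 0 < h)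
    (hx : x ∈ s) (hxh : x + 2 * h ∈ s) :
    f (x + h) - f x ≤ f (x + 2 * h) - f (x + h) := by
  have hslope := hf.slope_mono_adjacent hx hxh (y := x + h) (by linarith) (by linarith)
  rwa [show x + h - x = h by ring, show x + 2 * h - (x + h) = h by ring,
    div_le_div_iff_of_pos_right hh] at hslope

theorem sum_range_mul_second_difference {R : Type*} [CommRing R] (a r : ℕ → R) (n : ℕ) :
    ∑ j ∈ Finset.range (n + 2), a j * (r j - 2 * r (j + 1) + r (j + 2)) =
      a 0 * r 0 + (a 1 - 2 * a 0) * r 1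
        + ∑ m ∈ Finset.range n, (a (m + 2) - 2 * a (m + 1) + a m) * r (m + 2)
        + (a n - 2 * a (n + 1)) * r (n + 2) + a (n + 1) * r (n + 3) := by
  induction n with
  | zero => simp only [Finset.sum_range_succ, Finset.sum_range_zero]; ring
  | succ n ih => rw [Finset.sum_range_succ, ih, Finset.sum_range_succ _ n]; ring

theorem hat_nonneg (h c t : ℝ) : 0 ≤ hat h c t :=
  le_max_right _ _

theorem hat_self (h c : ℝ) : hat h c c = 1 := by
  simp [hat]

theorem hat_eq_zero {h c t : ℝ} (hh : 0 < h) (hct : h ≤ |t - c|) : hat h c t = 0 :=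
  max_eq_right (sub_nonpos.2 ((one_le_div hh).2 hct))

theorem hat_eq_second_difference {h : ℝ} (hh : 0 < h) (c t : ℝ) :
    hat h c t = (max (t - (c - h)) 0 - 2 * max (t - c) 0 + max (t - (c + h)) 0) / h := by
  have hscale : hat h c t = max (h - |t - c|) 0 / h := by
    rw [hat, ← max_div_div_right hh.le, sub_div, div_self hh.ne', zero_div]
  rw [hscale]
  congr 1
  grind

section HatInterp

variable {h : ℝ} {N : ℕ} {a : ℕ → ℝ}

theorem hatInterp_node (hh : 0 < h) (a : ℕ → ℝ) {i : ℕ} (hi : i ≤ N) :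
    hatInterp h N a (i * h) = a i := by
  have hat_of_ne (j : ℕ) (hji : j ≠ i) : a j * hat h (j * h) (i * h) = 0 := by
    have hdist : (1 : ℝ) ≤ |(i : ℝ) - j| := by
      exact_mod_cast Int.one_le_abs (sub_ne_zero.2 (Nat.cast_injective.ne hji.symm))
    have hfar : h ≤ |i * h - j * h| := by
      rw [← sub_mul, abs_mul, abs_of_pos hh]
      exact le_mul_of_one_le_left hh.le hdist
    rw [hat_eq_zero hh hfar, mul_zero]
  rw [hatInterp, Finset.sum_eq_single_of_mem i (Finset.mem_range_succ_iff.2 hi)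
    fun j _ => hat_of_ne j, hat_self, mul_one]

theorem node_mem_Icc (hh : 0 ≤ h) {i : ℕ} (hi : i ≤ N) : i * h ∈ Set.Icc 0 (N * h) :=
  ⟨by positivity, by gcongr⟩

theorem hatInterp_eq_affine_add_ramps (hh : 0 < h) (a : ℕ → ℝ) (n : ℕ) {t : ℝ}
    (ht : t ∈ Set.Icc 0 ((n + 1 : ℕ) * h)) :
    hatInterp h (n + 1) a t = (a 1 - a 0) / h * t + a 0 +
      ∑ m ∈ Finset.range n,
        (a (m + 2) - 2 * a (m + 1) + a m) / h * max (t - (m + 1) * h) 0 := by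
  obtain ⟨ht0, htn⟩ := ht
  push_cast at htn
  -- `r m` is the ramp starting at the node `(m - 1) * h`; the ramp from `-h` enters the hat at `0`.
  let r : ℕ → ℝ := fun m => max (t - (m - 1) * h) 0
  have hat_eq (j : ℕ) : hat h (j * h) t = (r j - 2 * r (j + 1) + r (j + 2)) / h := by
    rw [hat_eq_second_difference hh]
    simp only [r]
    push_cast
    ring_nf
  have r_zero : r 0 = t + h := by
    simp only [r]; rw [max_eq_left] <;> push_cast <;> linarith
  have r_one : r 1 = t := by
    simp only [r]; rw [max_eq_left] <;> push_cast <;> linarith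
  have r_add_two (m : ℕ) : r (m + 2) = max (t - (m + 1) * h) 0 := by
    simp only [r]; push_cast; ring_nf
  have r_last : r (n + 2) = 0 := by
    rw [r_add_two, max_eq_right]; linarith
  have r_past_last : r (n + 3) = 0 := by
    rw [r_add_two (n + 1), max_eq_right]; push_cast; linarith
  simp only [hatInterp, hat_eq, mul_div_assoc', ← Finset.sum_div, div_mul_eq_mul_div, ← r_add_two]
  rw [sum_range_mul_second_difference, r_zero, r_one, r_last, r_past_last]
  field_simp
  ring

theorem convexOn_hatInterp (hh : 0 < h)
    (ha : ∀ j, j + 2 ≤ N → a (j + 1) - a j ≤ a (j + 2) - a (j + 1)) :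
    ConvexOn ℝ (Set.Icc 0 (N * h)) (hatInterp h N a) := by
  have hs : Convex ℝ (Set.Icc 0 (N * h)) := convex_Icc _ _
  obtain _ | n := N
  · refine (convexOn_const (a 0) hs).congr fun t ht => ?_
    obtain rfl : t = (0 : ℕ) * h := by simpa using ht
    exact (hatInterp_node hh a le_rfl).symm
  · refine ((convexOn_mul_add hs _ _).add (convexOn_sum hs fun m hm => ?_)).congr fun t ht =>
      (hatInterp_eq_affine_add_ramps hh a n ht).symm
    have hcoeff : 0 ≤ a (m + 2) - 2 * a (m + 1) + a m := by
      linarith [ha m (by have := Finset.mem_range.1 hm; omega)]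
    exact (convexOn_max_sub_zero hs _).smul (div_nonneg hcoeff hh.le)

theorem convexOn_hatInterp_iff (hh : 0 < h) :
    ConvexOn ℝ (Set.Icc 0 (N * h)) (hatInterp h N a) ↔
      ∀ j, j + 2 ≤ N → a (j + 1) - a j ≤ a (j + 2) - a (j + 1) := by
  refine ⟨fun hconv j hj => ?_, convexOn_hatInterp hh⟩
  have node_one : (j : ℝ) * h + h = (j + 1 : ℕ) * h := by push_cast; ring
  have node_two : (j : ℝ) * h + 2 * h = (j + 2 : ℕ) * h := by push_cast; ring
  have hdiff := sub_le_sub_of_convexOn hconv hh (node_mem_Icc hh.le (by omega : j ≤ N))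
    (node_two ▸ node_mem_Icc hh.le hj)
  rwa [node_one, node_two, hatInterp_node hh a (by omega), hatInterp_node hh a (by omega),
    hatInterp_node hh a hj] at hdiff

theorem convexOn_hatInterp_of_convexOn {E : Type*} [AddCommMonoid E] [SMul ℝ E] {s : Set E}
    (hs : Convex ℝ s) {f : ℕ → E → ℝ} (hf : ∀ i ≤ N, ConvexOn ℝ s (f i)) (T : ℝ) :
    ConvexOn ℝ s (fun x => hatInterp h N (fun i => f i x) T) := by
  refine convexOn_sum hs fun i hi => ?_
  simpa only [smul_eq_mul, mul_comm] using
    (hf i (Finset.mem_range_succ_iff.1 hi)).smul (hat_nonneg h (i * h) T)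

theorem interp_eq_hatInterp (N : ℕ) (ρ : ℕ → ℕ → ℝ) (T k : ℝ) :
    interp N ρ T k = hatInterp (1 / N) N (fun i => hatInterp (1 / N) N (ρ i) k) T := by
  simp only [interp, hatInterp, Finset.sum_mul]
  exact Finset.sum_congr rfl fun i _ => Finset.sum_congr rfl fun j _ => by ring

end HatInterp

/-- Proposition 1(iii): `p^h(T,k)` is convex in `k` on `[0,1]` for every
fixed `T ∈ [0,1]` iff `ρ_{i,j+2} − ρ_{i,j+1} ≥ ρ_{i,j+1} − ρ_{i,j}` for all
`0 ≤ i ≤ N`, `0 ≤ j ≤ N−2`. -/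
theorem interp_convex_iff (N : ℕ) (hN : 1 ≤ N) (ρ : ℕ → ℕ → ℝ) :
    (∀ T ∈ Set.Icc (0 : ℝ) 1, ConvexOn ℝ (Set.Icc (0 : ℝ) 1) (fun k => interp N ρ T k)) ↔
      (∀ i j : ℕ, i ≤ N → j + 2 ≤ N →
        ρ i (j + 1) - ρ i j ≤ ρ i (j + 2) - ρ i (j + 1)) := by
  have hN_pos : (0 : ℝ) < N := by exact_mod_cast hN
  have hmesh : (0 : ℝ) < 1 / N := one_div_pos.2 hN_pos
  have hunit : Set.Icc (0 : ℝ) 1 = Set.Icc 0 ((N : ℝ) * (1 / N)) := by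
    rw [mul_one_div_cancel hN_pos.ne']
  simp only [interp_eq_hatInterp, hunit]
  constructor
  · intro hconv i j hi
    have hrow := hconv _ (node_mem_Icc hmesh.le hi)
    simp only [hatInterp_node hmesh _ hi] at hrow
    exact (convexOn_hatInterp_iff hmesh).1 hrow j
  · intro hρ T _
    exact convexOn_hatInterp_of_convexOn (convex_Icc _ _)
      (fun i hi => (convexOn_hatInterp_iff hmesh).2 fun j => hρ i j hi) T
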